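/- arXiv:1801.04307 — 5 statements merged into one kernel-verified Lean document; each statement's English description precedes it below -/
import Mathlib

section
/- Let N0, N1 be positive integers, L = lcm(N0, N1), and let a : {0,…,N0−1} × {0,…,N1−1} → ℂ be a (finitely supported) coefficient function defining the 2-D signal x(n0, n1) = Σ_{(m0,m1)} a(m0,m1)·exp(2πi·(m0·n0/N0 + m1·n1/N1)). For any integers α0, α1, τ0, τ1, define the line samples s(l) = x(α0·l + τ0, α1·l + τ1) for l = 0,…,L−1, and the L-point DFT ŝ(m) = (1/L)·Σ_{l=0}^{L−1} s(l)·exp(−2πi·l·m/L). Then for every m ∈ {0,…,L−1}, ŝ(m) = Σ a(m0,m1)·exp(2πi·(m0·τ0/N0 + m1·τ1/N1)), where the sum ranges over exactly those pairs (m0, m1) for which m0·α0/N0 + m1·α1/N1 − m/L is an integer. -/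
open Complex Finset
open scoped Classical

/-- The 2-D on-grid signal `x(n0,n1) = Σ_{(m0,m1)} a(m0,m1)·e^{2πi(m0·n0/N0 + m1·n1/N1)}`. -/
noncomputable def signal2D (N0 N1 : ℕ) (a : Fin N0 × Fin N1 → ℂ) (n0 n1 : ℤ) : ℂ :=
  ∑ p : Fin N0 × Fin N1, a p *
    Complex.exp (2 * (Real.pi : ℂ) * Complex.I *
      (((p.1 : ℕ) : ℂ) * (n0 : ℂ) / (N0 : ℂ) + ((p.2 : ℕ) : ℂ) * (n1 : ℂ) / (N1 : ℂ)))

/-- The `L`-point DFT of the slice of the signal along the discrete line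
`l ↦ (α0·l + τ0, α1·l + τ1)`, where `L = lcm(N0, N1)`. -/
noncomputable def sliceDFT (N0 N1 : ℕ) (a : Fin N0 × Fin N1 → ℂ)
    (α0 α1 τ0 τ1 : ℤ) (m : ℕ) : ℂ :=
  (1 / ((Nat.lcm N0 N1 : ℕ) : ℂ)) *
    ∑ l ∈ Finset.range (Nat.lcm N0 N1),
      signal2D N0 N1 a (α0 * l + τ0) (α1 * l + τ1) *
        Complex.exp (-(2 * (Real.pi : ℂ) * Complex.I * (l : ℂ) * (m : ℂ) /
          ((Nat.lcm N0 N1 : ℕ) : ℂ)))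

/-- The frequency grid point `(m0, m1)` projects onto bin `m`, i.e.
`m0·α0/N0 + m1·α1/N1 − m/L` is an integer. -/
def projectsTo (N0 N1 : ℕ) (α0 α1 : ℤ) (m : ℕ) (p : Fin N0 × Fin N1) : Prop :=
  ∃ k : ℤ, ((p.1 : ℕ) : ℝ) * (α0 : ℝ) / (N0 : ℝ) + ((p.2 : ℕ) : ℝ) * (α1 : ℝ) / (N1 : ℝ)
    - (m : ℝ) / ((Nat.lcm N0 N1 : ℕ) : ℝ) = (k : ℝ)

theorem geom_aux (L : ℕ) (hL : 0 < L) (z : ℂ) (M : ℤ) (hz : z * L = M) :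
    (1 / (L : ℂ)) * ∑ l ∈ Finset.range L, Complex.exp (2 * (Real.pi : ℂ) * Complex.I * ((l : ℂ) * z))
      = if (∃ k : ℤ, z = k) then 1 else 0 := by
  have hLc : (L : ℂ) ≠ 0 := by exact_mod_cast hL.ne'
  have h1 : ∀ l ∈ Finset.range L, Complex.exp (2 * (Real.pi : ℂ) * Complex.I * ((l : ℂ) * z))
      = (Complex.exp (2 * (Real.pi : ℂ) * Complex.I * z)) ^ l := by
    intro l _
    rw [← Complex.exp_nat_mul]
    congr 1
    ring
  rw [Finset.sum_congr rfl h1]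
  have hp : (2 * (Real.pi : ℂ) * Complex.I) ≠ 0 := Complex.two_pi_I_ne_zero
  have hiff : Complex.exp (2 * (Real.pi : ℂ) * Complex.I * z) = 1 ↔ ∃ k : ℤ, z = k := by
    rw [Complex.exp_eq_one_iff]
    refine exists_congr fun k => ?_
    rw [mul_comm (k : ℂ)]
    exact mul_right_inj' hp
  split_ifs with h
  · rw [hiff.2 h]
    simp [hLc]
  · have hne := fun h' => h (hiff.1 h')
    rw [geom_sum_eq hne, ← Complex.exp_nat_mul]
    have : Complex.exp ((L : ℂ) * (2 * (Real.pi : ℂ) * Complex.I * z)) = 1 := by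
      rw [Complex.exp_eq_one_iff]
      refine ⟨M, ?_⟩
      rw [← hz]
      ring
    rw [this]
    simp

/-- **Fourier projection-slice identity of FPS-SFT.** For every bin
`m ∈ {0,…,L−1}`, the `L`-point DFT of the line samples equals the sum of
`a(m0,m1)·e^{2πi(m0·τ0/N0 + m1·τ1/N1)}` over exactly those pairs `(m0, m1)`
for which `m0·α0/N0 + m1·α1/N1 − m/L` is an integer. -/
theorem fps_sft_projection_slice
    (N0 N1 : ℕ) (hN0 : 0 < N0) (hN1 : 0 < N1)
    (a : Fin N0 × Fin N1 → ℂ) (α0 α1 τ0 τ1 : ℤ) :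
    ∀ m ∈ Finset.range (Nat.lcm N0 N1),
      sliceDFT N0 N1 a α0 α1 τ0 τ1 m =
        ∑ p ∈ Finset.univ.filter (projectsTo N0 N1 α0 α1 m),
          a p * Complex.exp (2 * (Real.pi : ℂ) * Complex.I *
            (((p.1 : ℕ) : ℂ) * (τ0 : ℂ) / (N0 : ℂ) + ((p.2 : ℕ) : ℂ) * (τ1 : ℂ) / (N1 : ℂ))) := by
  intro m _
  have hL : 0 < Nat.lcm N0 N1 := Nat.lcm_pos hN0 hN1
  obtain ⟨c0, hc0⟩ := Nat.dvd_lcm_left N0 N1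
  obtain ⟨c1, hc1⟩ := Nat.dvd_lcm_right N0 N1
  unfold sliceDFT signal2D
  generalize hLdef : Nat.lcm N0 N1 = L at *
  have hLc : (L : ℂ) ≠ 0 := by exact_mod_cast hL.ne'
  have h0 : (N0 : ℂ) ≠ 0 := by exact_mod_cast hN0.ne'
  have h1 : (N1 : ℂ) ≠ 0 := by exact_mod_cast hN1.ne'
  have hc0' : (L : ℂ) = N0 * c0 := by exact_mod_cast hc0
  have hc1' : (L : ℂ) = N1 * c1 := by exact_mod_cast hc1
  simp_rw [Finset.sum_mul]
  rw [Finset.sum_comm, Finset.mul_sum, Finset.sum_filter]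
  refine Finset.sum_congr rfl fun p _ => ?_
  have key := geom_aux L hL
    (((p.1 : ℕ) : ℂ) * (α0 : ℂ) / (N0 : ℂ) + ((p.2 : ℕ) : ℂ) * (α1 : ℂ) / (N1 : ℂ)
      - (m : ℂ) / (L : ℂ))
    ((p.1 : ℕ) * α0 * c0 + (p.2 : ℕ) * α1 * c1 - m) (by
      have e0 : ((p.1 : ℕ) : ℂ) * (α0 : ℂ) / (N0 : ℂ) * L = (p.1 : ℕ) * α0 * c0 := by
        rw [hc0']; field_simp
      have e1 : ((p.2 : ℕ) : ℂ) * (α1 : ℂ) / (N1 : ℂ) * L = (p.2 : ℕ) * α1 * c1 := by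
        rw [hc1']; field_simp
      have e2 : (m : ℂ) / (L : ℂ) * L = m := by field_simp
      rw [sub_mul, add_mul, e0, e1, e2]
      push_cast
      ring)
  have hiff : projectsTo N0 N1 α0 α1 m p ↔ ∃ k : ℤ,
      ((p.1 : ℕ) : ℂ) * (α0 : ℂ) / (N0 : ℂ) + ((p.2 : ℕ) : ℂ) * (α1 : ℂ) / (N1 : ℂ)
      - (m : ℂ) / (L : ℂ) = k := by
    unfold projectsTo
    rw [hLdef]
    refine exists_congr fun k => ?_
    rw [← Complex.ofReal_inj]
    push_cast
    rfl
  have hterm : ∀ l ∈ Finset.range L,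
      a p * Complex.exp (2 * (Real.pi : ℂ) * Complex.I *
        (((p.1 : ℕ) : ℂ) * ((α0 * l + τ0 : ℤ) : ℂ) / (N0 : ℂ)
          + ((p.2 : ℕ) : ℂ) * ((α1 * l + τ1 : ℤ) : ℂ) / (N1 : ℂ))) *
        Complex.exp (-(2 * (Real.pi : ℂ) * Complex.I * (l : ℂ) * (m : ℂ) / (L : ℂ)))
      = (a p * Complex.exp (2 * (Real.pi : ℂ) * Complex.I *
            (((p.1 : ℕ) : ℂ) * (τ0 : ℂ) / (N0 : ℂ) + ((p.2 : ℕ) : ℂ) * (τ1 : ℂ) / (N1 : ℂ)))) *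
        Complex.exp (2 * (Real.pi : ℂ) * Complex.I * ((l : ℂ) *
          (((p.1 : ℕ) : ℂ) * (α0 : ℂ) / (N0 : ℂ) + ((p.2 : ℕ) : ℂ) * (α1 : ℂ) / (N1 : ℂ)
      - (m : ℂ) / (L : ℂ)))) := by
    intro l _
    rw [mul_assoc (a p), mul_assoc (a p), ← Complex.exp_add, ← Complex.exp_add]
    congr 2
    push_cast
    ring
  rw [Finset.sum_congr rfl hterm, ← Finset.mul_sum, mul_left_comm, key]
  by_cases h : projectsTo N0 N1 α0 α1 m p
  · rw [if_pos h, if_pos (hiff.1 h), mul_one]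
  · rw [if_neg h, if_neg (fun h' => h (hiff.2 h')), mul_zero]
end

section
/- With the setup of the projection-slice identity (2-D signal x with on-grid coefficients a, line parameters (α0, α1, τ0, τ1), L = lcm(N0, N1), and slice DFT ŝ), suppose bin m ∈ {0,…,L−1} is 1-sparse: there is exactly one pair (m0, m1) with a(m0, m1) ≠ 0 and m0·α0/N0 + m1·α1/N1 − m/L an integer, and all other pairs (m0′, m1′) with a(m0′, m1′) ≠ 0 satisfy m0′·α0/N0 + m1′·α1/N1 − m/L ∉ ℤ. Then ŝ(m) = a(m0, m1)·exp(2πi·(m0·τ0/N0 + m1·τ1/N1)), and in particular ŝ(m) ≠ 0. -/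
open Complex Finset
open scoped Classical

/-- The phase increment of grid point `p` along the line, relative to bin `m`. -/
noncomputable def binPhase (N0 N1 : ℕ) (α0 α1 : ℤ) (m : ℕ) (p : Fin N0 × Fin N1) : ℂ :=
  ((p.1 : ℕ) : ℂ) * (α0 : ℂ) / (N0 : ℂ) + ((p.2 : ℕ) : ℂ) * (α1 : ℂ) / (N1 : ℂ)
    - (m : ℂ) / ((Nat.lcm N0 N1 : ℕ) : ℂ)

theorem projectsTo_iff (N0 N1 : ℕ) (α0 α1 : ℤ) (m : ℕ) (p : Fin N0 × Fin N1) :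
    projectsTo N0 N1 α0 α1 m p ↔
      Complex.exp (2 * (Real.pi : ℂ) * Complex.I * binPhase N0 N1 α0 α1 m p) = 1 := by
  rw [Complex.exp_eq_one_iff]
  unfold projectsTo binPhase
  have h2 : (2 * (Real.pi : ℂ) * Complex.I) ≠ 0 := Complex.two_pi_I_ne_zero
  refine exists_congr fun k => ?_
  rw [mul_comm (k : ℂ), mul_right_inj' h2]
  rw [← Complex.ofReal_inj]
  push_cast
  rfl

theorem lcm_phase (N0 N1 : ℕ) (hN0 : 0 < N0) (hN1 : 0 < N1) (α0 α1 : ℤ) (m : ℕ)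
    (p : Fin N0 × Fin N1) :
    Complex.exp (2 * (Real.pi : ℂ) * Complex.I * binPhase N0 N1 α0 α1 m p)
      ^ (Nat.lcm N0 N1) = 1 := by
  rw [← Complex.exp_nat_mul, Complex.exp_eq_one_iff]
  have h0 : (N0 : ℂ) ≠ 0 := by exact_mod_cast hN0.ne'
  have h1 : (N1 : ℂ) ≠ 0 := by exact_mod_cast hN1.ne'
  have hL : ((Nat.lcm N0 N1 : ℕ) : ℂ) ≠ 0 := by
    exact_mod_cast (Nat.lcm_pos hN0 hN1).ne'
  obtain ⟨c, hc⟩ := Nat.dvd_lcm_left N0 N1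
  obtain ⟨d, hd⟩ := Nat.dvd_lcm_right N0 N1
  have hc' : ((Nat.lcm N0 N1 : ℕ) : ℂ) = N0 * c := by exact_mod_cast hc
  have hd' : ((Nat.lcm N0 N1 : ℕ) : ℂ) = N1 * d := by exact_mod_cast hd
  refine ⟨(p.1 : ℕ) * α0 * c + (p.2 : ℕ) * α1 * d - m, ?_⟩
  have key : ((Nat.lcm N0 N1 : ℕ) : ℂ) * binPhase N0 N1 α0 α1 m p =
      ((p.1 : ℕ) : ℂ) * α0 * c + ((p.2 : ℕ) : ℂ) * α1 * d - m := by
    unfold binPhase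
    have e0 : ((Nat.lcm N0 N1 : ℕ) : ℂ) * (((p.1 : ℕ) : ℂ) * (α0 : ℂ) / (N0 : ℂ)) =
        ((p.1 : ℕ) : ℂ) * α0 * c := by
      rw [hc']; field_simp
    have e1 : ((Nat.lcm N0 N1 : ℕ) : ℂ) * (((p.2 : ℕ) : ℂ) * (α1 : ℂ) / (N1 : ℂ)) =
        ((p.2 : ℕ) : ℂ) * α1 * d := by
      rw [hd']; field_simp
    rw [mul_sub, mul_add, e0, e1, mul_div_cancel₀ _ hL]
  push_cast
  rw [← key]
  ring

theorem geom_phase (N0 N1 : ℕ) (hN0 : 0 < N0) (hN1 : 0 < N1) (α0 α1 : ℤ) (m : ℕ)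
    (p : Fin N0 × Fin N1) :
    ∑ l ∈ Finset.range (Nat.lcm N0 N1),
      Complex.exp (2 * (Real.pi : ℂ) * Complex.I * binPhase N0 N1 α0 α1 m p) ^ l =
      if projectsTo N0 N1 α0 α1 m p then ((Nat.lcm N0 N1 : ℕ) : ℂ) else 0 := by
  split_ifs with h
  · rw [projectsTo_iff] at h
    simp [h]
  · rw [projectsTo_iff] at h
    rw [geom_sum_eq h, lcm_phase N0 N1 hN0 hN1]
    simp

theorem sliceDFT_eq (N0 N1 : ℕ) (hN0 : 0 < N0) (hN1 : 0 < N1)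
    (a : Fin N0 × Fin N1 → ℂ) (α0 α1 τ0 τ1 : ℤ) (m : ℕ) :
    sliceDFT N0 N1 a α0 α1 τ0 τ1 m = ∑ p : Fin N0 × Fin N1,
      if projectsTo N0 N1 α0 α1 m p then
        a p * Complex.exp (2 * (Real.pi : ℂ) * Complex.I *
        (((p.1 : ℕ) : ℂ) * (τ0 : ℂ) / (N0 : ℂ) + ((p.2 : ℕ) : ℂ) * (τ1 : ℂ) / (N1 : ℂ)))
      else 0 := by
  have hL : ((Nat.lcm N0 N1 : ℕ) : ℂ) ≠ 0 := by
    exact_mod_cast (Nat.lcm_pos hN0 hN1).ne'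
  unfold sliceDFT signal2D
  simp_rw [Finset.sum_mul]
  rw [Finset.sum_comm, Finset.mul_sum]
  refine Finset.sum_congr rfl fun p _ => ?_
  have hterm : ∀ l ∈ Finset.range (Nat.lcm N0 N1),
      a p * Complex.exp (2 * (Real.pi : ℂ) * Complex.I *
        (((p.1 : ℕ) : ℂ) * ((α0 * l + τ0 : ℤ) : ℂ) / (N0 : ℂ) +
          ((p.2 : ℕ) : ℂ) * ((α1 * l + τ1 : ℤ) : ℂ) / (N1 : ℂ))) *
        Complex.exp (-(2 * (Real.pi : ℂ) * Complex.I * (l : ℂ) * (m : ℂ) /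
          ((Nat.lcm N0 N1 : ℕ) : ℂ))) =
      (a p * Complex.exp (2 * (Real.pi : ℂ) * Complex.I *
        (((p.1 : ℕ) : ℂ) * (τ0 : ℂ) / (N0 : ℂ) + ((p.2 : ℕ) : ℂ) * (τ1 : ℂ) / (N1 : ℂ)))) *
      Complex.exp (2 * (Real.pi : ℂ) * Complex.I * binPhase N0 N1 α0 α1 m p) ^ l := by
    intro l _
    rw [← Complex.exp_nat_mul, mul_assoc (a p), mul_assoc (a p), ← Complex.exp_add, ← Complex.exp_add]
    unfold binPhase
    congr 2
    push_cast
    ring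
  rw [Finset.sum_congr rfl hterm, ← Finset.mul_sum, geom_phase N0 N1 hN0 hN1]
  split_ifs
  · field_simp
  · simp

/-- **Value of a 1-sparse bin.** If bin `m` is 1-sparse — exactly one pair
`(m0, m1)` with `a(m0,m1) ≠ 0` projects onto it — then
`ŝ(m) = a(m0,m1)·e^{2πi(m0·τ0/N0 + m1·τ1/N1)}`, and in particular `ŝ(m) ≠ 0`. -/
theorem fps_sft_one_sparse_bin
    (N0 N1 : ℕ) (hN0 : 0 < N0) (hN1 : 0 < N1)
    (a : Fin N0 × Fin N1 → ℂ) (α0 α1 τ0 τ1 : ℤ)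
    (m : ℕ) (hm : m ∈ Finset.range (Nat.lcm N0 N1))
    (p₀ : Fin N0 × Fin N1) (ha : a p₀ ≠ 0)
    (hproj : projectsTo N0 N1 α0 α1 m p₀)
    (huniq : ∀ q : Fin N0 × Fin N1, a q ≠ 0 → projectsTo N0 N1 α0 α1 m q → q = p₀) :
    sliceDFT N0 N1 a α0 α1 τ0 τ1 m =
      a p₀ * Complex.exp (2 * (Real.pi : ℂ) * Complex.I *
        (((p₀.1 : ℕ) : ℂ) * (τ0 : ℂ) / (N0 : ℂ) + ((p₀.2 : ℕ) : ℂ) * (τ1 : ℂ) / (N1 : ℂ))) ∧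
    sliceDFT N0 N1 a α0 α1 τ0 τ1 m ≠ 0 := by
  have h : sliceDFT N0 N1 a α0 α1 τ0 τ1 m =
      a p₀ * Complex.exp (2 * (Real.pi : ℂ) * Complex.I *
        (((p₀.1 : ℕ) : ℂ) * (τ0 : ℂ) / (N0 : ℂ) +
          ((p₀.2 : ℕ) : ℂ) * (τ1 : ℂ) / (N1 : ℂ))) := by
    rw [sliceDFT_eq N0 N1 hN0 hN1, Finset.sum_eq_single p₀, if_pos hproj]
    · intro q _ hq
      split_ifs with hp
      · by_cases haq : a q = 0
        · rw [haq, zero_mul]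
        · exact absurd (huniq q haq hp) hq
      · rfl
    · intro hn
      exact absurd (Finset.mem_univ _) hn
  refine ⟨h, ?_⟩
  rw [h]
  exact mul_ne_zero ha (Complex.exp_ne_zero _)
end

section
/- With the setup of the projection-slice identity, suppose bin m is 1-sparse with unique contributing pair (m0, m1), a(m0, m1) ≠ 0. Let ŝ_τ denote the slice DFT with offsets τ = (τ0, τ1), ŝ_{τ⁰} the slice DFT with offsets (τ0 + 1, τ1), and ŝ_{τ¹} the slice DFT with offsets (τ0, τ1 + 1), all with the same slope (α0, α1). Then ŝ_{τ⁰}(m) / ŝ_τ(m) = exp(2πi·m0/N0) and ŝ_{τ¹}(m) / ŝ_τ(m) = exp(2πi·m1/N1); i.e., the two frequency components are independently encoded in the phases of the two ratios. -/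
open Complex Finset
open scoped Classical

/-- The phase of a grid point is trivial exactly when it projects onto the bin. -/
theorem phase_eq_one_iff_aux (N0 N1 : ℕ) (α0 α1 : ℤ) (m : ℕ) (p : Fin N0 × Fin N1) :
    Complex.exp (2 * (Real.pi : ℂ) * Complex.I *
        (((p.1 : ℕ) : ℂ) * (α0 : ℂ) / (N0 : ℂ) + ((p.2 : ℕ) : ℂ) * (α1 : ℂ) / (N1 : ℂ)
          - (m : ℂ) / ((Nat.lcm N0 N1 : ℕ) : ℂ))) = 1 ↔ projectsTo N0 N1 α0 α1 m p := by
  rw [Complex.exp_eq_one_iff, projectsTo]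
  refine exists_congr fun k => ?_
  rw [mul_comm (k : ℂ), mul_right_inj' Complex.two_pi_I_ne_zero]
  rw [← Complex.ofReal_inj]
  push_cast
  rfl

/-- Geometric sum of a root of unity over one period. -/
theorem geom_aux_s3 (N0 N1 : ℕ) (hN0 : 0 < N0) (hN1 : 0 < N1) (α0 α1 : ℤ) (m : ℕ)
    (p : Fin N0 × Fin N1) :
    ∑ l ∈ Finset.range (Nat.lcm N0 N1),
      Complex.exp (2 * (Real.pi : ℂ) * Complex.I *
        (((p.1 : ℕ) : ℂ) * (α0 : ℂ) / (N0 : ℂ) + ((p.2 : ℕ) : ℂ) * (α1 : ℂ) / (N1 : ℂ)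
          - (m : ℂ) / ((Nat.lcm N0 N1 : ℕ) : ℂ))) ^ l =
    if projectsTo N0 N1 α0 α1 m p then ((Nat.lcm N0 N1 : ℕ) : ℂ) else 0 := by
  have hiff := phase_eq_one_iff_aux N0 N1 α0 α1 m p
  split_ifs with h
  · rw [hiff.2 h]
    simp
  · rw [geom_sum_eq (fun h1 => h (hiff.1 h1)), ← Complex.exp_nat_mul]
    have hL : Nat.lcm N0 N1 ≠ 0 := Nat.lcm_ne_zero hN0.ne' hN1.ne'
    obtain ⟨c0, h0⟩ := Nat.dvd_lcm_left N0 N1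
    obtain ⟨c1, h1⟩ := Nat.dvd_lcm_right N0 N1
    have hL' : ((Nat.lcm N0 N1 : ℕ) : ℂ) ≠ 0 := by exact_mod_cast hL
    have hN0' : (N0 : ℂ) ≠ 0 := by exact_mod_cast hN0.ne'
    have hN1' : (N1 : ℂ) ≠ 0 := by exact_mod_cast hN1.ne'
    have h0' : ((Nat.lcm N0 N1 : ℕ) : ℂ) = N0 * c0 := by exact_mod_cast h0
    have h1' : ((Nat.lcm N0 N1 : ℕ) : ℂ) = N1 * c1 := by exact_mod_cast h1
    generalize ((Nat.lcm N0 N1 : ℕ) : ℂ) = L at *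
    have key : L * (2 * (Real.pi : ℂ) * Complex.I *
        (((p.1 : ℕ) : ℂ) * (α0 : ℂ) / (N0 : ℂ) + ((p.2 : ℕ) : ℂ) * (α1 : ℂ) / (N1 : ℂ)
          - (m : ℂ) / L)) =
        (((p.1 : ℕ) * α0 * c0 + (p.2 : ℕ) * α1 * c1 - m : ℤ) : ℂ) *
          (2 * (Real.pi : ℂ) * Complex.I) := by
      have e0 : L * (((p.1 : ℕ) : ℂ) * (α0 : ℂ) / (N0 : ℂ)) = (p.1 : ℕ) * α0 * c0 := by
        rw [h0']; field_simp
      have e1 : L * (((p.2 : ℕ) : ℂ) * (α1 : ℂ) / (N1 : ℂ)) = (p.2 : ℕ) * α1 * c1 := by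
        rw [h1']; field_simp
      have e2 : L * ((m : ℂ) / L) = m := by field_simp
      push_cast
      linear_combination (2 * (Real.pi : ℂ) * Complex.I) * (e0 + e1 - e2)
    rw [key, Complex.exp_int_mul_two_pi_mul_I]
    simp

/-- The slice DFT at a 1-sparse bin. -/
theorem sliceDFT_aux (N0 N1 : ℕ) (hN0 : 0 < N0) (hN1 : 0 < N1)
    (a : Fin N0 × Fin N1 → ℂ) (α0 α1 τ0 τ1 : ℤ) (m : ℕ)
    (p₀ : Fin N0 × Fin N1)
    (hproj : projectsTo N0 N1 α0 α1 m p₀)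
    (huniq : ∀ q : Fin N0 × Fin N1, a q ≠ 0 → projectsTo N0 N1 α0 α1 m q → q = p₀) :
    sliceDFT N0 N1 a α0 α1 τ0 τ1 m = a p₀ * Complex.exp (2 * (Real.pi : ℂ) * Complex.I *
      (((p₀.1 : ℕ) : ℂ) * (τ0 : ℂ) / (N0 : ℂ) + ((p₀.2 : ℕ) : ℂ) * (τ1 : ℂ) / (N1 : ℂ))) := by
  have hL' : ((Nat.lcm N0 N1 : ℕ) : ℂ) ≠ 0 := by
    exact_mod_cast Nat.lcm_ne_zero hN0.ne' hN1.ne'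
  have hsum : ∑ l ∈ Finset.range (Nat.lcm N0 N1),
      signal2D N0 N1 a (α0 * l + τ0) (α1 * l + τ1) *
        Complex.exp (-(2 * (Real.pi : ℂ) * Complex.I * (l : ℂ) * (m : ℂ) /
          ((Nat.lcm N0 N1 : ℕ) : ℂ))) =
      ∑ p : Fin N0 × Fin N1, (a p * Complex.exp (2 * (Real.pi : ℂ) * Complex.I *
      (((p.1 : ℕ) : ℂ) * (τ0 : ℂ) / (N0 : ℂ) + ((p.2 : ℕ) : ℂ) * (τ1 : ℂ) / (N1 : ℂ)))) *
        (if projectsTo N0 N1 α0 α1 m p then ((Nat.lcm N0 N1 : ℕ) : ℂ) else 0) := by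
    simp_rw [← geom_aux_s3 N0 N1 hN0 hN1, signal2D, Finset.sum_mul, Finset.mul_sum]
    rw [Finset.sum_comm]
    refine Finset.sum_congr rfl fun p _ => Finset.sum_congr rfl fun l _ => ?_
    rw [← Complex.exp_nat_mul, mul_assoc (a p), mul_assoc (a p), ← Complex.exp_add, ← Complex.exp_add]
    congr 2
    push_cast
    ring
  rw [sliceDFT, hsum, Finset.sum_eq_single p₀]
  · rw [if_pos hproj]
    field_simp
  · intro q _ hq
    by_cases haq : a q = 0
    · simp [haq]
    · rw [if_neg (fun h => hq (huniq q haq h)), mul_zero]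
  · simp

/-- **OFDM-trick frequency decoding (equation (9) of the paper).** If bin `m` is
1-sparse with unique contributing pair `(m0, m1)`, then the ratios of the slice
DFTs taken with offsets `(τ0+1, τ1)` and `(τ0, τ1+1)` to the one with offsets
`(τ0, τ1)` equal `e^{2πi·m0/N0}` and `e^{2πi·m1/N1}` respectively: the two
frequency components are independently encoded in the phases of the two ratios. -/
theorem fps_sft_frequency_decoding
    (N0 N1 : ℕ) (hN0 : 0 < N0) (hN1 : 0 < N1)
    (a : Fin N0 × Fin N1 → ℂ) (α0 α1 τ0 τ1 : ℤ)
    (m : ℕ) (hm : m ∈ Finset.range (Nat.lcm N0 N1))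
    (p₀ : Fin N0 × Fin N1) (ha : a p₀ ≠ 0)
    (hproj : projectsTo N0 N1 α0 α1 m p₀)
    (huniq : ∀ q : Fin N0 × Fin N1, a q ≠ 0 → projectsTo N0 N1 α0 α1 m q → q = p₀) :
    sliceDFT N0 N1 a α0 α1 (τ0 + 1) τ1 m / sliceDFT N0 N1 a α0 α1 τ0 τ1 m =
      Complex.exp (2 * (Real.pi : ℂ) * Complex.I * (((p₀.1 : ℕ) : ℂ) / (N0 : ℂ))) ∧
    sliceDFT N0 N1 a α0 α1 τ0 (τ1 + 1) m / sliceDFT N0 N1 a α0 α1 τ0 τ1 m =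
      Complex.exp (2 * (Real.pi : ℂ) * Complex.I * (((p₀.2 : ℕ) : ℂ) / (N1 : ℂ))) := by
  rw [sliceDFT_aux N0 N1 hN0 hN1 a α0 α1 _ _ m p₀ hproj huniq,
    sliceDFT_aux N0 N1 hN0 hN1 a α0 α1 _ _ m p₀ hproj huniq,
    sliceDFT_aux N0 N1 hN0 hN1 a α0 α1 _ _ m p₀ hproj huniq]
  constructor
  · rw [mul_div_mul_left _ _ ha, ← Complex.exp_sub]
    congr 1
    push_cast
    ring
  · rw [mul_div_mul_left _ _ ha, ← Complex.exp_sub]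
    congr 1
    push_cast
    ring
end

section
/- With the setup of the projection-slice identity, suppose bin m is 1-sparse with unique contributing pair (m0, m1). Then the complex amplitude is recovered exactly as a(m0, m1) = ŝ_τ(m) · exp(−2πi·(m0·τ0/N0 + m1·τ1/N1)). -/
open Complex Finset
open scoped Classical

/-- Inner geometric sum for a single frequency. -/
theorem fps_aux_geom (N0 N1 : ℕ) (hN0 : 0 < N0) (hN1 : 0 < N1) (α0 α1 : ℤ) (m : ℕ)
    (p : Fin N0 × Fin N1) (θ : ℝ)
    (hθ : θ = ((p.1 : ℕ) : ℝ) * (α0 : ℝ) / (N0 : ℝ) + ((p.2 : ℕ) : ℝ) * (α1 : ℝ) / (N1 : ℝ)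
      - (m : ℝ) / ((Nat.lcm N0 N1 : ℕ) : ℝ)) :
    ∑ l ∈ Finset.range (Nat.lcm N0 N1), Complex.exp (2 * (Real.pi : ℂ) * Complex.I * (θ : ℂ)) ^ l
      = if projectsTo N0 N1 α0 α1 m p then ((Nat.lcm N0 N1 : ℕ) : ℂ) else 0 := by
  have hpi : (2 * (Real.pi : ℂ) * Complex.I) ≠ 0 := Complex.two_pi_I_ne_zero
  split_ifs with h
  · obtain ⟨k, hk⟩ := h
    rw [← hθ] at hk
    have : Complex.exp (2 * (Real.pi : ℂ) * Complex.I * (θ : ℂ)) = 1 := by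
      rw [Complex.exp_eq_one_iff]
      exact ⟨k, by rw [hk]; push_cast; ring⟩
    simp [this]
  · have hz : Complex.exp (2 * (Real.pi : ℂ) * Complex.I * (θ : ℂ)) ≠ 1 := by
      intro h1
      rw [Complex.exp_eq_one_iff] at h1
      obtain ⟨k, hk⟩ := h1
      apply h
      refine ⟨k, ?_⟩
      rw [← hθ]
      rw [mul_comm (k : ℂ)] at hk
      have := mul_left_cancel₀ hpi hk
      exact_mod_cast this
    have hL : Nat.lcm N0 N1 ≠ 0 := (Nat.lcm_pos hN0 hN1).ne'
    have hzL : Complex.exp (2 * (Real.pi : ℂ) * Complex.I * (θ : ℂ)) ^ (Nat.lcm N0 N1) = 1 := by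
      rw [← Complex.exp_nat_mul, Complex.exp_eq_one_iff]
      obtain ⟨c0, hc0⟩ := Nat.dvd_lcm_left N0 N1
      obtain ⟨c1, hc1⟩ := Nat.dvd_lcm_right N0 N1
      refine ⟨(p.1 : ℕ) * α0 * c0 + (p.2 : ℕ) * α1 * c1 - m, ?_⟩
      have e0 : ((Nat.lcm N0 N1 : ℕ) : ℝ) = N0 * c0 := by exact_mod_cast hc0
      have e1 : ((Nat.lcm N0 N1 : ℕ) : ℝ) = N1 * c1 := by exact_mod_cast hc1
      have n0 : (N0 : ℝ) ≠ 0 := by exact_mod_cast hN0.ne'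
      have n1 : (N1 : ℝ) ≠ 0 := by exact_mod_cast hN1.ne'
      have nL : ((Nat.lcm N0 N1 : ℕ) : ℝ) ≠ 0 := by exact_mod_cast hL
      have key : ((Nat.lcm N0 N1 : ℕ) : ℝ) * θ
          = (p.1 : ℕ) * α0 * c0 + (p.2 : ℕ) * α1 * c1 - m := by
        rw [hθ, mul_sub, mul_add, mul_div_cancel₀ _ nL]
        congr 2
        · rw [e0]; field_simp
        · rw [e1]; field_simp
      have key' : ((Nat.lcm N0 N1 : ℕ) : ℂ) * (θ : ℂ)
          = (p.1 : ℕ) * α0 * c0 + (p.2 : ℕ) * α1 * c1 - m := by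
        exact_mod_cast congrArg (fun x : ℝ => (x : ℂ)) key
      push_cast
      rw [← key']
      ring
    rw [geom_sum_eq hz, hzL]
    simp

/-- **Exact amplitude recovery from a 1-sparse bin.** If bin `m` is 1-sparse
with unique contributing pair `(m0, m1)`, then the complex amplitude is
recovered exactly as `a(m0,m1) = ŝ_τ(m)·e^{−2πi(m0·τ0/N0 + m1·τ1/N1)}`. -/
theorem fps_sft_amplitude_recovery
    (N0 N1 : ℕ) (hN0 : 0 < N0) (hN1 : 0 < N1)
    (a : Fin N0 × Fin N1 → ℂ) (α0 α1 τ0 τ1 : ℤ)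
    (m : ℕ) (hm : m ∈ Finset.range (Nat.lcm N0 N1))
    (p₀ : Fin N0 × Fin N1) (ha : a p₀ ≠ 0)
    (hproj : projectsTo N0 N1 α0 α1 m p₀)
    (huniq : ∀ q : Fin N0 × Fin N1, a q ≠ 0 → projectsTo N0 N1 α0 α1 m q → q = p₀) :
    a p₀ = sliceDFT N0 N1 a α0 α1 τ0 τ1 m *
      Complex.exp (-(2 * (Real.pi : ℂ) * Complex.I *
        (((p₀.1 : ℕ) : ℂ) * (τ0 : ℂ) / (N0 : ℂ) + ((p₀.2 : ℕ) : ℂ) * (τ1 : ℂ) / (N1 : ℂ)))) := by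
  have hL : ((Nat.lcm N0 N1 : ℕ) : ℂ) ≠ 0 := by
    exact_mod_cast (Nat.lcm_pos hN0 hN1).ne'
  have main : sliceDFT N0 N1 a α0 α1 τ0 τ1 m = a p₀ * Complex.exp (2 * (Real.pi : ℂ) * Complex.I *
        (((p₀.1 : ℕ) : ℂ) * (τ0 : ℂ) / (N0 : ℂ) + ((p₀.2 : ℕ) : ℂ) * (τ1 : ℂ) / (N1 : ℂ))) := by
    unfold sliceDFT signal2D
    simp_rw [Finset.sum_mul]
    rw [Finset.sum_comm]
    have hterm : ∀ p : Fin N0 × Fin N1, ∑ l ∈ Finset.range (Nat.lcm N0 N1),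
        a p * Complex.exp (2 * (Real.pi : ℂ) * Complex.I *
          (((p.1 : ℕ) : ℂ) * ((α0 * l + τ0 : ℤ) : ℂ) / (N0 : ℂ)
            + ((p.2 : ℕ) : ℂ) * ((α1 * l + τ1 : ℤ) : ℂ) / (N1 : ℂ))) *
        Complex.exp (-(2 * (Real.pi : ℂ) * Complex.I * (l : ℂ) * (m : ℂ) /
          ((Nat.lcm N0 N1 : ℕ) : ℂ)))
        = a p * Complex.exp (2 * (Real.pi : ℂ) * Complex.I *
          (((p.1 : ℕ) : ℂ) * (τ0 : ℂ) / (N0 : ℂ) + ((p.2 : ℕ) : ℂ) * (τ1 : ℂ) / (N1 : ℂ))) *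
          (if projectsTo N0 N1 α0 α1 m p then ((Nat.lcm N0 N1 : ℕ) : ℂ) else 0) := by
      intro p
      rw [← fps_aux_geom N0 N1 hN0 hN1 α0 α1 m p _ rfl, Finset.mul_sum]
      refine Finset.sum_congr rfl fun l _ => ?_
      rw [mul_assoc (a p), mul_assoc (a p), ← Complex.exp_add, ← Complex.exp_nat_mul, ← Complex.exp_add]
      congr 2
      push_cast
      ring
    rw [Finset.sum_congr rfl fun p _ => hterm p, Finset.sum_eq_single p₀]
    · rw [if_pos hproj]
      field_simp
    · intro q _ hq
      by_cases h : projectsTo N0 N1 α0 α1 m q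
      · have : a q = 0 := by
          by_contra h0
          exact hq (huniq q h0 h)
        simp [this]
      · simp [h]
    · simp
  rw [main, mul_assoc, ← Complex.exp_add, add_neg_cancel, Complex.exp_zero, mul_one]
end

section
/- Let N0, N1 be positive integers, L = lcm(N0, N1), and let a : {0,…,N0−1} × {0,…,N1−1} → ℂ be finitely supported, defining x_r(n0, n1) = Σ_{(m0,m1)} a(m0,m1)·exp(2πi·(m0·n0/N0 + m1·n1/N1)). For integers α0, α1, τ0, τ1, define for each m ∈ {0,…,L−1} the projected bins ŝ_r(m) = Σ a(m0,m1)·exp(2πi·(m0·τ0/N0 + m1·τ1/N1)), the sum over all (m0, m1) with m0·α0/N0 + m1·α1/N1 − m/L ∈ ℤ. Then for every l ∈ {0,…,L−1}, the inverse DFT Σ_{m=0}^{L−1} ŝ_r(m)·exp(2πi·l·m/L) equals x_r(α0·l + τ0, α1·l + τ1); i.e., the line samples of x_r are exactly reconstructed from its projected bins. -/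
open Complex Finset
open scoped Classical

/-- Every frequency grid point projects onto exactly one bin in `{0,…,L-1}`. -/
theorem projectsTo_unique_bin (N0 N1 : ℕ) (hN0 : 0 < N0) (hN1 : 0 < N1) (α0 α1 : ℤ)
    (p : Fin N0 × Fin N1) :
    ∃ b ∈ Finset.range (Nat.lcm N0 N1), projectsTo N0 N1 α0 α1 b p ∧
      ∀ m ∈ Finset.range (Nat.lcm N0 N1), projectsTo N0 N1 α0 α1 m p → m = b := by
  have hL : 0 < Nat.lcm N0 N1 := Nat.lcm_pos hN0 hN1
  obtain ⟨c0, h0⟩ := Nat.dvd_lcm_left N0 N1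
  obtain ⟨c1, h1⟩ := Nat.dvd_lcm_right N0 N1
  unfold projectsTo
  generalize Nat.lcm N0 N1 = L at *
  have hLR : (L : ℝ) ≠ 0 := by positivity
  have hN0R : (N0 : ℝ) ≠ 0 := by positivity
  have hN1R : (N1 : ℝ) ≠ 0 := by positivity
  have h0R : (L : ℝ) = N0 * c0 := by exact_mod_cast h0
  have h1R : (L : ℝ) = N1 * c1 := by exact_mod_cast h1
  have hLZ : (0 : ℤ) < L := by exact_mod_cast hL
  obtain ⟨M, hM⟩ : ∃ M : ℤ, M = ((p.1 : ℕ) : ℤ) * α0 * c0 + ((p.2 : ℕ) : ℤ) * α1 * c1 := ⟨_, rfl⟩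
  have key : ((p.1 : ℕ) : ℝ) * (α0 : ℝ) / (N0 : ℝ) + ((p.2 : ℕ) : ℝ) * (α1 : ℝ) / (N1 : ℝ)
      = (M : ℝ) / L := by
    have e0 : ((p.1 : ℕ) : ℝ) * (α0 : ℝ) / (N0 : ℝ) = ((p.1 : ℕ) : ℝ) * α0 * c0 / L := by
      rw [div_eq_div_iff hN0R hLR, h0R]; ring
    have e1 : ((p.2 : ℕ) : ℝ) * (α1 : ℝ) / (N1 : ℝ) = ((p.2 : ℕ) : ℝ) * α1 * c1 / L := by
      rw [div_eq_div_iff hN1R hLR, h1R]; ring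
    rw [e0, e1, hM]; push_cast; ring
  have iff1 : ∀ m : ℕ, ∀ k : ℤ, ((M : ℝ) / L - (m : ℝ) / L = k ↔ M - m = k * L) := by
    intro m k
    rw [← sub_div, div_eq_iff hLR]
    exact_mod_cast Iff.rfl
  simp only [key, iff1]
  have hnn := Int.emod_nonneg M hLZ.ne'
  have hlt := Int.emod_lt_of_pos M hLZ
  refine ⟨(M % L).toNat, ?_, ⟨M / L, ?_⟩, ?_⟩
  · rw [Finset.mem_range]; omega
  · rw [Int.toNat_of_nonneg hnn]
    linarith [Int.emod_add_mul_ediv M L, mul_comm (M / L) (L : ℤ)]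
  · rintro m hm ⟨k, hk⟩
    rw [Finset.mem_range] at hm
    have : M = m + k * L := by linarith
    have h2 : M % L = m := by
      rw [this, Int.add_mul_emod_self_right]
      exact Int.emod_eq_of_lt (by positivity) (by exact_mod_cast hm)
    omega

/-- **Correctness of the subtraction step of FPS-SFT.** The line samples of the
recovered on-grid signal are exactly reconstructed by projecting the recovered
sinusoids into the `L` frequency bins and applying an `L`-point inverse DFT:
for every `l ∈ {0,…,L−1}`,
`Σ_{m=0}^{L−1} ŝ_r(m)·e^{2πi·l·m/L} = x_r(α0·l + τ0, α1·l + τ1)`, where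
`ŝ_r(m) = Σ a(m0,m1)·e^{2πi(m0·τ0/N0 + m1·τ1/N1)}` over the pairs `(m0, m1)`
with `m0·α0/N0 + m1·α1/N1 − m/L ∈ ℤ`. -/
theorem fps_sft_line_reconstruction
    (N0 N1 : ℕ) (hN0 : 0 < N0) (hN1 : 0 < N1)
    (a : Fin N0 × Fin N1 → ℂ) (α0 α1 τ0 τ1 : ℤ) :
    ∀ l ∈ Finset.range (Nat.lcm N0 N1),
      ∑ m ∈ Finset.range (Nat.lcm N0 N1),
        (∑ p ∈ Finset.univ.filter (projectsTo N0 N1 α0 α1 m),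
            a p * Complex.exp (2 * (Real.pi : ℂ) * Complex.I *
              (((p.1 : ℕ) : ℂ) * (τ0 : ℂ) / (N0 : ℂ) +
                ((p.2 : ℕ) : ℂ) * (τ1 : ℂ) / (N1 : ℂ)))) *
          Complex.exp (2 * (Real.pi : ℂ) * Complex.I * (l : ℂ) * (m : ℂ) /
            ((Nat.lcm N0 N1 : ℕ) : ℂ)) =
      signal2D N0 N1 a (α0 * l + τ0) (α1 * l + τ1) := by
  intro l _
  have step : ∀ m ∈ Finset.range (Nat.lcm N0 N1),
      (∑ p ∈ Finset.univ.filter (projectsTo N0 N1 α0 α1 m),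
            a p * Complex.exp (2 * (Real.pi : ℂ) * Complex.I *
              (((p.1 : ℕ) : ℂ) * (τ0 : ℂ) / (N0 : ℂ) +
                ((p.2 : ℕ) : ℂ) * (τ1 : ℂ) / (N1 : ℂ)))) *
          Complex.exp (2 * (Real.pi : ℂ) * Complex.I * (l : ℂ) * (m : ℂ) /
            ((Nat.lcm N0 N1 : ℕ) : ℂ)) =
      ∑ p : Fin N0 × Fin N1, if projectsTo N0 N1 α0 α1 m p then
        a p * Complex.exp (2 * (Real.pi : ℂ) * Complex.I *
          (((p.1 : ℕ) : ℂ) * ((α0 * l + τ0 : ℤ) : ℂ) / (N0 : ℂ) +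
            ((p.2 : ℕ) : ℂ) * ((α1 * l + τ1 : ℤ) : ℂ) / (N1 : ℂ))) else 0 := by
    intro m _
    rw [Finset.sum_mul, ← Finset.sum_filter]
    refine Finset.sum_congr rfl fun p hp => ?_
    obtain ⟨k, hk⟩ := (Finset.mem_filter.mp hp).2
    have hkC : ((p.1 : ℕ) : ℂ) * (α0 : ℂ) / (N0 : ℂ) + ((p.2 : ℕ) : ℂ) * (α1 : ℂ) / (N1 : ℂ)
        - (m : ℂ) / ((Nat.lcm N0 N1 : ℕ) : ℂ) = (k : ℂ) := by
      have h := congrArg Complex.ofReal hk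
      push_cast at h
      exact h
    rw [mul_assoc, ← Complex.exp_add]
    congr 1
    rw [Complex.exp_eq_exp_iff_exists_int]
    refine ⟨-(l * k), ?_⟩
    push_cast
    rw [← hkC]
    ring
  rw [Finset.sum_congr rfl step, Finset.sum_comm]
  unfold signal2D
  refine Finset.sum_congr rfl fun p _ => ?_
  obtain ⟨b, hb, hpb, huniq⟩ := projectsTo_unique_bin N0 N1 hN0 hN1 α0 α1 p
  rw [Finset.sum_eq_single_of_mem b hb, if_pos hpb]
  intro m hm hne
  exact if_neg fun h => hne (huniq m hm h)
end
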